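/- Suppose S_n(t), S̄_n(t) ∈ ℂ^N and v_n(t) ∈ ℂ (n ∈ ℤ, t ∈ ℝ, differentiable in t) satisfy the discrete multicomponent Yajima–Oikawa system (dgvYO) with constant c ∈ ℂ. Let w_n(t) ∈ ℂ be differentiable in t with w_n(t) ≠ 0, w_n = v_n w_{n−1}, and w_{n,t} = (1/2) w_n (⟨S_{n+1}, S̄_n⟩ + ⟨S_n, S̄_{n+1}⟩), for all n and t. Define r_n := w_n^{−1} S_n and r̄_n := w_{n−1} S̄_n. Then (r, r̄, v) satisfies the transformed system (trans_dgvYO): i r_{n,t} = v_n v_{n+1} r_{n+1} + r_{n−1} − (i/2) r_n ( v_n v_{n+1} ⟨r_{n+1}, r̄_n⟩ + ⟨r_n, r̄_{n+1}⟩ ) − c r_n; i r̄_{n,t} = −r̄_{n+1} − v_n v_{n−1} r̄_{n−1} + (i/2) r̄_n ( v_n v_{n−1} ⟨r_n, r̄_{n−1}⟩ + ⟨r_{n−1}, r̄_n⟩ ) + c r̄_n; and v_{n,t} = (1/2) v_n Δ⁺( v_n v_{n−1} ⟨r_n, r̄_{n−1}⟩ + ⟨r_{n−1}, r̄_n⟩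 ), for all n and t. -/

import Mathlib

open Complex BigOperators

/-- Bilinear pairing on `ℂ^N` (no complex conjugation). -/
noncomputable def pair {N : ℕ} (a b : Fin N → ℂ) : ℂ := ∑ k, a k * b k

/-! The pair `(r, rb)` is the gauge transform of `(S, Sb)` by the multiplicative potential `w` of
`v`. The relation `w n = v n * w (n - 1)` shows that each pairing of neighbouring sites is
invariant, or invariant up to the factor `v n * v (n + 1)`, so the densities of the two systems
agree; it also shifts the coefficient `v n` from one neighbour to the other in the linear terms.
Differentiation of `w⁻¹ • S` and `w • Sb` adds only the logarithmic derivative of `w`, which is half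
such a density: this is the nonlinear term of the transformed system. -/

section LogarithmicDerivative

variable {𝕜 K E : Type*} [NontriviallyNormedField 𝕜] [NontriviallyNormedField K]
  [NormedAlgebra 𝕜 K] [NormedAddCommGroup E] [NormedSpace 𝕜 E] [NormedSpace K E]
  [IsScalarTower 𝕜 K E] {w : 𝕜 → K} {f : 𝕜 → E} {g : K} {f' : E} {t : 𝕜}

lemma hasDerivAt_smul_of_hasDerivAt_mul (hw : HasDerivAt w (g * w t) t) (hf : HasDerivAt f f' t) :
    HasDerivAt (fun s ↦ w s • f s) (w t • (f' + g • f t)) t := by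
  refine (hw.fun_smul hf).congr_deriv ?_
  module

lemma hasDerivAt_inv_smul_of_hasDerivAt_mul (hw₀ : w t ≠ 0) (hw : HasDerivAt w (g * w t) t)
    (hf : HasDerivAt f f' t) :
    HasDerivAt (fun s ↦ (w s)⁻¹ • f s) ((w t)⁻¹ • (f' - g • f t)) t := by
  have hinv : HasDerivAt (fun s ↦ (w s)⁻¹) (-g * (w t)⁻¹) t :=
    (hw.fun_inv hw₀).congr_deriv (by field_simp)
  refine (hasDerivAt_smul_of_hasDerivAt_mul hinv hf).congr_deriv ?_
  module

end LogarithmicDerivative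

/-- `w` is a nowhere vanishing multiplicative potential of the lattice function `v`, that is,
`v n = w n / w (n - 1)`. -/
structure IsMulPotential {K : Type*} [Field K] (v w : ℤ → K) : Prop where
  ne_zero (n : ℤ) : w n ≠ 0
  eq_mul_pred (n : ℤ) : w n = v n * w (n - 1)

namespace IsMulPotential

variable {K E F : Type*} [Field K] [AddCommGroup E] [Module K E] [AddCommGroup F] [Module K F]
  {v w : ℤ → K}

lemma mul_inv_eq_inv_pred (h : IsMulPotential v w) (n : ℤ) :
    v n * (w n)⁻¹ = (w (n - 1))⁻¹ := by
  rw [mul_inv_eq_iff_eq_mul₀ (h.ne_zero n), eq_inv_mul_iff_mul_eq₀ (h.ne_zero (n - 1)), mul_comm,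
    h.eq_mul_pred n]

lemma succ_mul_inv_succ_eq_inv (h : IsMulPotential v w) (n : ℤ) :
    v (n + 1) * (w (n + 1))⁻¹ = (w n)⁻¹ := by
  simpa only [add_sub_cancel_right] using h.mul_inv_eq_inv_pred (n + 1)

lemma mul_pairing_succ_add_pairing_eq (h : IsMulPotential v w) (B : E →ₗ[K] F →ₗ[K] K)
    (S : ℤ → E) (Sb : ℤ → F) (n : ℤ) :
    v n * v (n + 1) * B ((w (n + 1))⁻¹ • S (n + 1)) (w (n - 1) • Sb n)
        + B ((w n)⁻¹ • S n) (w (n + 1 - 1) • Sb (n + 1))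
      = B (S (n + 1)) (Sb n) + B (S n) (Sb (n + 1)) := by
  have hsucc : v n * v (n + 1) * ((w (n + 1))⁻¹ * w (n - 1)) = 1 := by
    rw [← mul_inv_cancel₀ (h.ne_zero n), ← h.succ_mul_inv_succ_eq_inv n, h.eq_mul_pred n]
    ring
  have hself : (w n)⁻¹ * w n = 1 := inv_mul_cancel₀ (h.ne_zero n)
  simp only [map_smul, LinearMap.smul_apply, smul_eq_mul, add_sub_cancel_right]
  linear_combination B (S (n + 1)) (Sb n) * hsucc + B (S n) (Sb (n + 1)) * hself

lemma mul_pairing_pred_add_pairing_eq (h : IsMulPotential v w) (B : E →ₗ[K] F →ₗ[K] K)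
    (S : ℤ → E) (Sb : ℤ → F) (n : ℤ) :
    v n * v (n - 1) * B ((w n)⁻¹ • S n) (w (n - 1 - 1) • Sb (n - 1))
        + B ((w (n - 1))⁻¹ • S (n - 1)) (w (n - 1) • Sb n)
      = B (S n) (Sb (n - 1)) + B (S (n - 1)) (Sb n) := by
  simpa only [sub_add_cancel, mul_comm (v (n - 1))] using
    h.mul_pairing_succ_add_pairing_eq B S Sb (n - 1)

end IsMulPotential

section YajimaOikawa

variable {E F : Type*} [NormedAddCommGroup E] [NormedSpace ℂ E]
  [NormedAddCommGroup F] [NormedSpace ℂ F]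

/-- `(S, Sb, v)` solves the discrete Yajima–Oikawa system (dgvYO) with constant `c`, for fields
with values in complex normed spaces paired by an arbitrary bilinear form `B`. -/
structure IsYajimaOikawa (B : E →ₗ[ℂ] F →ₗ[ℂ] ℂ) (c : ℂ) (S : ℤ → ℝ → E) (Sb : ℤ → ℝ → F)
    (v : ℤ → ℝ → ℂ) : Prop where
  differentiable_left (n : ℤ) : Differentiable ℝ (S n)
  differentiable_right (n : ℤ) : Differentiable ℝ (Sb n)
  differentiable_coeff (n : ℤ) : Differentiable ℝ (v n)
  deriv_left (n : ℤ) (t : ℝ) : I • deriv (S n) t = v n t • (S (n + 1) t + S (n - 1) t) - c • S n t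
  deriv_right (n : ℤ) (t : ℝ) :
    I • deriv (Sb n) t = -(v n t • (Sb (n + 1) t + Sb (n - 1) t)) + c • Sb n t
  deriv_coeff (n : ℤ) (t : ℝ) : deriv (v n) t = (1 / 2) * v n t *
    ((B (S (n + 1) t) (Sb n t) + B (S n t) (Sb (n + 1) t))
      - (B (S n t) (Sb (n - 1) t) + B (S (n - 1) t) (Sb n t)))

/-- `w` is a time-dependent multiplicative potential of `v` whose logarithmic derivative is half the
density `B S_{n+1} S̄_n + B S_n S̄_{n+1}`; it generates the gauge transformation from (dgvYO) to
(trans_dgvYO). -/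
structure IsGaugePotential (B : E →ₗ[ℂ] F →ₗ[ℂ] ℂ) (S : ℤ → ℝ → E) (Sb : ℤ → ℝ → F)
    (v w : ℤ → ℝ → ℂ) : Prop where
  isMulPotential (t : ℝ) : IsMulPotential (v · t) (w · t)
  differentiable (n : ℤ) : Differentiable ℝ (w n)
  deriv_eq (n : ℤ) (t : ℝ) : deriv (w n) t =
    (1 / 2) * w n t * (B (S (n + 1) t) (Sb n t) + B (S n t) (Sb (n + 1) t))

/-- `(r, rb, v)` solves the transformed system (trans_dgvYO) with constant `c`, in the generality
of `IsYajimaOikawa`. -/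
structure IsTransformedYajimaOikawa (B : E →ₗ[ℂ] F →ₗ[ℂ] ℂ) (c : ℂ) (r : ℤ → ℝ → E)
    (rb : ℤ → ℝ → F) (v : ℤ → ℝ → ℂ) : Prop where
  differentiable_left (n : ℤ) : Differentiable ℝ (r n)
  differentiable_right (n : ℤ) : Differentiable ℝ (rb n)
  differentiable_coeff (n : ℤ) : Differentiable ℝ (v n)
  deriv_left (n : ℤ) (t : ℝ) : I • deriv (r n) t
    = (v n t * v (n + 1) t) • r (n + 1) t + r (n - 1) t
      - ((I / 2) * (v n t * v (n + 1) t * B (r (n + 1) t) (rb n t)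
          + B (r n t) (rb (n + 1) t))) • r n t
      - c • r n t
  deriv_right (n : ℤ) (t : ℝ) : I • deriv (rb n) t
    = -(rb (n + 1) t) - (v n t * v (n - 1) t) • rb (n - 1) t
      + ((I / 2) * (v n t * v (n - 1) t * B (r n t) (rb (n - 1) t)
          + B (r (n - 1) t) (rb n t))) • rb n t
      + c • rb n t
  deriv_coeff (n : ℤ) (t : ℝ) : deriv (v n) t = (1 / 2) * v n t *
    ((v (n + 1) t * v n t * B (r (n + 1) t) (rb n t) + B (r n t) (rb (n + 1) t))
      - (v n t * v (n - 1) t * B (r n t) (rb (n - 1) t) + B (r (n - 1) t) (rb n t)))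

variable {B : E →ₗ[ℂ] F →ₗ[ℂ] ℂ} {c : ℂ} {S : ℤ → ℝ → E} {Sb : ℤ → ℝ → F} {v w : ℤ → ℝ → ℂ}

namespace IsGaugePotential

lemma hasDerivAt (hw : IsGaugePotential B S Sb v w) (n : ℤ) (t : ℝ) :
    HasDerivAt (w n)
      ((1 / 2) * (B (S (n + 1) t) (Sb n t) + B (S n t) (Sb (n + 1) t)) * w n t) t :=
  (hw.differentiable n t).hasDerivAt.congr_deriv (by rw [hw.deriv_eq]; ring)

lemma hasDerivAt_pred (hw : IsGaugePotential B S Sb v w) (n : ℤ) (t : ℝ) :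
    HasDerivAt (w (n - 1))
      ((1 / 2) * (B (S n t) (Sb (n - 1) t) + B (S (n - 1) t) (Sb n t)) * w (n - 1) t) t := by
  simpa only [sub_add_cancel] using hw.hasDerivAt (n - 1) t

end IsGaugePotential

namespace IsYajimaOikawa

lemma hasDerivAt_inv_smul_left (hS : IsYajimaOikawa B c S Sb v) (hw : IsGaugePotential B S Sb v w)
    (n : ℤ) (t : ℝ) :
    HasDerivAt (fun s ↦ (w n s)⁻¹ • S n s)
      ((w n t)⁻¹ • (deriv (S n) t
        - ((1 / 2) * (B (S (n + 1) t) (Sb n t) + B (S n t) (Sb (n + 1) t))) • S n t)) t :=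
  hasDerivAt_inv_smul_of_hasDerivAt_mul ((hw.isMulPotential t).ne_zero n) (hw.hasDerivAt n t)
    (hS.differentiable_left n t).hasDerivAt

lemma hasDerivAt_smul_right (hS : IsYajimaOikawa B c S Sb v) (hw : IsGaugePotential B S Sb v w)
    (n : ℤ) (t : ℝ) :
    HasDerivAt (fun s ↦ w (n - 1) s • Sb n s)
      (w (n - 1) t • (deriv (Sb n) t
        + ((1 / 2) * (B (S n t) (Sb (n - 1) t) + B (S (n - 1) t) (Sb n t))) • Sb n t)) t :=
  hasDerivAt_smul_of_hasDerivAt_mul (hw.hasDerivAt_pred n t)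
    (hS.differentiable_right n t).hasDerivAt

lemma I_smul_deriv_inv_smul_left (hS : IsYajimaOikawa B c S Sb v)
    (hw : IsGaugePotential B S Sb v w) (n : ℤ) (t : ℝ) :
    I • deriv (fun s ↦ (w n s)⁻¹ • S n s) t
      = (v n t * v (n + 1) t) • (w (n + 1) t)⁻¹ • S (n + 1) t + (w (n - 1) t)⁻¹ • S (n - 1) t
        - ((I / 2) * (B (S (n + 1) t) (Sb n t) + B (S n t) (Sb (n + 1) t))) • (w n t)⁻¹ • S n t
        - c • (w n t)⁻¹ • S n t := by
  rw [(hS.hasDerivAt_inv_smul_left hw n t).deriv,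
    ← (hw.isMulPotential t).mul_inv_eq_inv_pred n]
  have hsucc := (hw.isMulPotential t).succ_mul_inv_succ_eq_inv n
  linear_combination (norm := module) (w n t)⁻¹ • hS.deriv_left n t
    - (v n t * hsucc) • (S (n + 1) t)

lemma I_smul_deriv_smul_right (hS : IsYajimaOikawa B c S Sb v)
    (hw : IsGaugePotential B S Sb v w) (n : ℤ) (t : ℝ) :
    I • deriv (fun s ↦ w (n - 1) s • Sb n s) t
      = -(w n t • Sb (n + 1) t) - (v n t * v (n - 1) t) • w (n - 1 - 1) t • Sb (n - 1) t
        + ((I / 2) * (B (S n t) (Sb (n - 1) t) + B (S (n - 1) t) (Sb n t)))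
          • w (n - 1) t • Sb n t
        + c • w (n - 1) t • Sb n t := by
  rw [(hS.hasDerivAt_smul_right hw n t).deriv, (hw.isMulPotential t).eq_mul_pred n]
  have hpred := (hw.isMulPotential t).eq_mul_pred (n - 1)
  linear_combination (norm := module) w (n - 1) t • hS.deriv_right n t
    - (v n t * hpred) • (Sb (n - 1) t)

end IsYajimaOikawa

theorem stmt18_general (hS : IsYajimaOikawa B c S Sb v) (hw : IsGaugePotential B S Sb v w) :
    IsTransformedYajimaOikawa B c (fun n t ↦ (w n t)⁻¹ • S n t)
      (fun n t ↦ w (n - 1) t • Sb n t) v where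
  differentiable_left n t := (hS.hasDerivAt_inv_smul_left hw n t).differentiableAt
  differentiable_right n t := (hS.hasDerivAt_smul_right hw n t).differentiableAt
  differentiable_coeff := hS.differentiable_coeff
  deriv_left n t := by
    rw [(hw.isMulPotential t).mul_pairing_succ_add_pairing_eq B (S · t) (Sb · t) n]
    exact hS.I_smul_deriv_inv_smul_left hw n t
  deriv_right n t := by
    rw [(hw.isMulPotential t).mul_pairing_pred_add_pairing_eq B (S · t) (Sb · t) n,
      add_sub_cancel_right]
    exact hS.I_smul_deriv_smul_right hw n t
  deriv_coeff n t := by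
    rw [mul_comm (v (n + 1) t),
      (hw.isMulPotential t).mul_pairing_succ_add_pairing_eq B (S · t) (Sb · t) n,
      (hw.isMulPotential t).mul_pairing_pred_add_pairing_eq B (S · t) (Sb · t) n]
    exact hS.deriv_coeff n t

end YajimaOikawa

theorem stmt18 {N : ℕ} (hN : 1 ≤ N)
    (S Sb : ℤ → ℝ → Fin N → ℂ) (v w : ℤ → ℝ → ℂ) (c : ℂ)
    (hSd : ∀ n, Differentiable ℝ (S n)) (hSbd : ∀ n, Differentiable ℝ (Sb n))
    (hvd : ∀ n, Differentiable ℝ (v n)) (hwd : ∀ n, Differentiable ℝ (w n))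
    (h1 : ∀ (n : ℤ) (t : ℝ),
      Complex.I • deriv (S n) t = (v n t) • (S (n+1) t + S (n-1) t) - c • S n t)
    (h2 : ∀ (n : ℤ) (t : ℝ),
      Complex.I • deriv (Sb n) t = -((v n t) • (Sb (n+1) t + Sb (n-1) t)) + c • Sb n t)
    (h3 : ∀ (n : ℤ) (t : ℝ), deriv (v n) t = (1/2) * v n t *
      ((pair (S (n+1) t) (Sb n t) + pair (S n t) (Sb (n+1) t))
        - (pair (S n t) (Sb (n-1) t) + pair (S (n-1) t) (Sb n t))))
    (hw0 : ∀ (n : ℤ) (t : ℝ), w n t ≠ 0)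
    (hwrec : ∀ (n : ℤ) (t : ℝ), w n t = v n t * w (n-1) t)
    (hwt : ∀ (n : ℤ) (t : ℝ), deriv (w n) t = (1/2) * w n t *
      (pair (S (n+1) t) (Sb n t) + pair (S n t) (Sb (n+1) t)))
    (r rb : ℤ → ℝ → Fin N → ℂ)
    (hr : ∀ (n : ℤ) (t : ℝ), r n t = (w n t)⁻¹ • S n t)
    (hrb : ∀ (n : ℤ) (t : ℝ), rb n t = (w (n-1) t) • Sb n t) :
    ∀ (n : ℤ) (t : ℝ),
      (Complex.I • deriv (r n) t
        = (v n t * v (n+1) t) • r (n+1) t + r (n-1) t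
          - ((Complex.I/2) * (v n t * v (n+1) t * pair (r (n+1) t) (rb n t)
              + pair (r n t) (rb (n+1) t))) • r n t
          - c • r n t)
      ∧ (Complex.I • deriv (rb n) t
        = -(rb (n+1) t) - (v n t * v (n-1) t) • rb (n-1) t
          + ((Complex.I/2) * (v n t * v (n-1) t * pair (r n t) (rb (n-1) t)
              + pair (r (n-1) t) (rb n t))) • rb n t
          + c • rb n t)
      ∧ (deriv (v n) t = (1/2) * v n t *
          ((v (n+1) t * v n t * pair (r (n+1) t) (rb n t) + pair (r n t) (rb (n+1) t))
            - (v n t * v (n-1) t * pair (r n t) (rb (n-1) t) + pair (r (n-1) t) (rb n t)))) := by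
  obtain rfl : r = fun n t ↦ (w n t)⁻¹ • S n t := funext₂ hr
  obtain rfl : rb = fun n t ↦ w (n - 1) t • Sb n t := funext₂ hrb
  have h := stmt18_general (B := dotProductBilin ℂ ℂ) ⟨hSd, hSbd, hvd, h1, h2, h3⟩
    ⟨fun t ↦ ⟨(hw0 · t), (hwrec · t)⟩, hwd, hwt⟩
  exact fun n t ↦ ⟨h.deriv_left n t, h.deriv_right n t, h.deriv_coeff n t⟩
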